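/- Let Π be a probability distribution on ℝ^d with density π(θ) = Z_Π^{-1} exp(−f(θ)), let α ∈ (0, +∞), and let C be a symmetric positive-definite d×d matrix. Suppose the function θ ↦ f(θ) − (α/2) θᵀ C^{-1} θ is convex on ℝ^d. Then f attains a unique minimum θ* ∈ ℝ^d, and the MHI algorithm with proposal N_d(θ*, α^{-1}C) satisfies, for every lower semicontinuous metric ρ and every t ≥ 1, W_ρ(P^t(θ*,·), Π) = (1 − ε_{θ*})^t ∫_{ℝ^d} ρ(θ, θ*) dΠ(θ), where ε_{θ*} = (2π)^{−d/2} α^{d/2} det(C)^{−1/2} Z_Π exp(f(θ*)). -/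

import Mathlib

/-!
Strong convexity makes `f` coercive, so it has a minimiser `θ*`, and the convexity inequality on
segments issuing from `θ*` gives `f θ ≥ f θ* + (α/2) (θ - θ*)ᵀ C⁻¹ (θ - θ*)`
(`add_quadForm_le_of_isMin`); uniqueness of the minimiser is immediate from this. The same
inequality says `ε π ≤ q` everywhere, with equality at `θ*`, where `q` is the Gaussian proposal
density. Hence from `θ*` the accepted density `a(θ*, ·) q` is exactly `ε π`, that is
`P(θ*, ·) = ε Π + (1 - ε) δ_{θ*}` (`mhiKernel_apply_of_minorized`).

Detailed balance makes `Π` invariant for `P` (`bind_mhiKernel`; the Gaussian normalisation is used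
here, through `A ≤ 1`), so by induction `P^t(θ*, ·) = (1 - (1 - ε)^t) Π + (1 - ε)^t δ_{θ*}`
(`kernelIter_eq_mixture`).

It remains to see that `W_ρ((1 - s) Π + s δ_x, Π) = s ∫ ρ(·, x) dΠ`. The coupling mixing the
diagonal coupling of `Π` with `δ_x ⊗ Π` gives `≤`. For `≥`, any coupling cost dominates the
difference of the integrals of a function that is 1-Lipschitz for `ρ`; the truncations
`min (ρ(·, x)) n` are such functions, have finite integrals, and vanish at `x`, and letting
`n → ∞` covers the case of an infinite right-hand side too.
-/

open MeasureTheory ENNReal Filter Matrix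
open scoped BigOperators NNReal

noncomputable section

/-- The set of couplings of two measures. -/
def couplings {E : Type*} [MeasurableSpace E] (μ ν : Measure E) : Set (Measure (E × E)) :=
  {ξ | ξ.map Prod.fst = μ ∧ ξ.map Prod.snd = ν}

/-- The `L₁` Wasserstein (transportation) distance with cost `ρ`, valued in `ℝ≥0∞`:
`W_ρ(μ, ν) = inf over couplings ξ of ∫ ρ dξ`. -/
def wassersteinDist {E : Type*} [MeasurableSpace E] (ρ : E → E → ℝ)
    (μ ν : Measure E) : ℝ≥0∞ :=
  ⨅ ξ ∈ couplings μ ν, ∫⁻ p, ENNReal.ofReal (ρ p.1 p.2) ∂ξ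

/-- `ρ` is a lower semicontinuous metric on the set `Θ`. -/
def IsLSCMetricOn {E : Type*} [TopologicalSpace E] (Θ : Set E) (ρ : E → E → ℝ) : Prop :=
  LowerSemicontinuousOn (fun p : E × E => ρ p.1 p.2) (Θ ×ˢ Θ) ∧
  (∀ x ∈ Θ, ∀ y ∈ Θ, 0 ≤ ρ x y) ∧ (∀ x ∈ Θ, ρ x x = 0) ∧
  (∀ x ∈ Θ, ∀ y ∈ Θ, ρ x y = 0 → x = y) ∧
  (∀ x ∈ Θ, ∀ y ∈ Θ, ρ x y = ρ y x) ∧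
  (∀ x ∈ Θ, ∀ y ∈ Θ, ∀ z ∈ Θ, ρ x z ≤ ρ x y + ρ y z)

/-- Metropolis–Hastings acceptance ratio for target density `π` and proposal density `q`. -/
def mhAccept {E : Type*} (π : E → ℝ) (q : E → E → ℝ) (θ θ' : E) : ℝ :=
  if 0 < π θ * q θ θ' then min (π θ' * q θ' θ / (π θ * q θ θ')) 1 else 1

/-- Metropolis–Hastings overall acceptance probability `A(θ)`. -/
def mhAcceptProb {E : Type*} [MeasureSpace E] (Θ : Set E) (π : E → ℝ) (q : E → E → ℝ)
    (θ : E) : ℝ :=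
  ∫ θ' in Θ, mhAccept π q θ θ' * q θ θ'

/-- The Metropolis–Hastings Markov kernel
`P(θ, B) = ∫_B a(θ,θ') q(θ,θ') dθ' + δ_θ(B) (1 - A(θ))`. -/
def mhKernel {E : Type*} [MeasureSpace E] (Θ : Set E) (π : E → ℝ) (q : E → E → ℝ)
    (θ : E) : Measure E :=
  (volume.restrict Θ).withDensity (fun θ' => ENNReal.ofReal (mhAccept π q θ θ' * q θ θ')) +
    (ENNReal.ofReal (1 - mhAcceptProb Θ π q θ)) • Measure.dirac θ

/-- `t`-fold iterate `P^t` of a Markov kernel, with `P^0(θ, ·) = δ_θ`. -/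
def kernelIter {E : Type*} [MeasurableSpace E] (P : E → Measure E) : ℕ → E → Measure E
  | 0, θ => Measure.dirac θ
  | (t + 1), θ => (P θ).bind (kernelIter P t)


/-- Acceptance ratio for the Metropolis–Hastings independence (MHI) algorithm, whose
proposal density `q` does not depend on the current state. -/
def mhiAccept {E : Type*} (π : E → ℝ) (q : E → ℝ) (θ θ' : E) : ℝ :=
  if 0 < π θ * q θ' then min (π θ' * q θ / (π θ * q θ')) 1 else 1

/-- Overall acceptance probability `A(θ)` for the MHI algorithm. -/
def mhiAcceptProb {E : Type*} [MeasureSpace E] (Θ : Set E) (π : E → ℝ) (q : E → ℝ)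
    (θ : E) : ℝ :=
  ∫ θ' in Θ, mhiAccept π q θ θ' * q θ'

/-- The MHI Markov kernel
`P(θ, B) = ∫_B a(θ,θ') q(θ') dθ' + δ_θ(B) (1 - A(θ))`. -/
def mhiKernel {E : Type*} [MeasureSpace E] (Θ : Set E) (π : E → ℝ) (q : E → ℝ)
    (θ : E) : Measure E :=
  (volume.restrict Θ).withDensity (fun θ' => ENNReal.ofReal (mhiAccept π q θ θ' * q θ')) +
    (ENNReal.ofReal (1 - mhiAcceptProb Θ π q θ)) • Measure.dirac θ


/-- Density of the `d`-dimensional Gaussian distribution `N_d(m, α⁻¹ C)`. -/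
def gaussDensity {d : ℕ} (m : Fin d → ℝ) (α : ℝ) (C : Matrix (Fin d) (Fin d) ℝ)
    (θ : Fin d → ℝ) : ℝ :=
  (2 * Real.pi) ^ (-(d : ℝ) / 2) * α ^ ((d : ℝ) / 2) * C.det ^ (-(1 : ℝ) / 2) *
    Real.exp (-(α / 2) * ((θ - m) ⬝ᵥ (C⁻¹ *ᵥ (θ - m))))

end

/-! ### Gaussian normalisation -/

lemma integral_exp_neg_mul_dotProduct_self {d : ℕ} {b : ℝ} :
    ∫ x : Fin d → ℝ, Real.exp (-b * (x ⬝ᵥ x)) = √(Real.pi / b) ^ d := by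
  have h := integral_fintype_prod_volume_eq_pow (𝕜 := ℝ) (ι := Fin d)
    (fun x : ℝ => Real.exp (-b * x ^ 2))
  rw [integral_gaussian, Fintype.card_fin] at h
  rw [← h]
  congr 1 with x
  rw [← Real.exp_sum, dotProduct, Finset.mul_sum]
  simp only [pow_two]

/-- Writing `C⁻¹ = Mᵀ M`, the substitution `y = M x` reduces this to a product of one-dimensional
Gaussian integrals. -/
lemma integral_exp_neg_quadForm {d : ℕ} {b : ℝ}
    {C : Matrix (Fin d) (Fin d) ℝ} (hC : C.PosDef) :
    ∫ x : Fin d → ℝ, Real.exp (-b * (x ⬝ᵥ (C⁻¹ *ᵥ x))) =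
      C.det ^ ((1 : ℝ) / 2) * √(Real.pi / b) ^ d := by
  obtain ⟨M, hM⟩ : ∃ M : Matrix (Fin d) (Fin d) ℝ, C⁻¹ = Mᵀ * M := by
    open scoped MatrixOrder in
    obtain ⟨M, hM⟩ := CStarAlgebra.nonneg_iff_eq_star_mul_self.mp hC.inv.posSemidef.nonneg
    exact ⟨M, by rw [hM, star_eq_conjTranspose, conjTranspose_eq_transpose_of_trivial]⟩
  have hCd : 0 < C.det := hC.det_pos
  have hdet : M.det * M.det = C.det⁻¹ := by
    have := congrArg Matrix.det hM
    rw [det_mul, det_transpose, Matrix.det_nonsing_inv, Ring.inverse_eq_inv'] at this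
    exact this.symm
  have hMd : M.det ≠ 0 := by
    intro h0
    rw [h0, mul_zero] at hdet
    exact (inv_pos.2 hCd).ne hdet
  have hq : ∀ x : Fin d → ℝ, x ⬝ᵥ (C⁻¹ *ᵥ x) = (M *ᵥ x) ⬝ᵥ (M *ᵥ x) := by
    intro x
    rw [hM, ← Matrix.mulVec_mulVec, Matrix.dotProduct_mulVec, Matrix.vecMul_transpose]
  have habs : |M.det⁻¹| = C.det ^ ((1 : ℝ) / 2) := by
    rw [← Real.sqrt_eq_rpow, ← Real.sqrt_sq_eq_abs, inv_pow, pow_two, hdet, inv_inv]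
  have hmap := Real.map_matrix_volume_pi_eq_smul_volume_pi hMd
  have hmeas : Measurable (Matrix.toLin' M) :=
    (LinearMap.continuous_of_finiteDimensional _).measurable
  calc ∫ x : Fin d → ℝ, Real.exp (-b * (x ⬝ᵥ (C⁻¹ *ᵥ x)))
      = ∫ x : Fin d → ℝ, Real.exp (-b * (Matrix.toLin' M x ⬝ᵥ Matrix.toLin' M x)) := by
        simp only [hq, Matrix.toLin'_apply]
    _ = ∫ y, Real.exp (-b * (y ⬝ᵥ y)) ∂(volume.map (Matrix.toLin' M)) := by
        rw [integral_map hmeas.aemeasurable]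
        refine Continuous.aestronglyMeasurable ?_
        simp only [dotProduct]
        fun_prop
    _ = _ := by
        rw [hmap, integral_smul_measure, integral_exp_neg_mul_dotProduct_self,
          ENNReal.toReal_ofReal (abs_nonneg _), habs, smul_eq_mul]

lemma integral_gaussDensity {d : ℕ} (m : Fin d → ℝ) {α : ℝ} (hα : 0 < α)
    {C : Matrix (Fin d) (Fin d) ℝ} (hC : C.PosDef) :
    ∫ θ, gaussDensity m α C θ = 1 := by
  have hCd : 0 < C.det := hC.det_pos
  have hpi := Real.pi_pos
  simp only [gaussDensity]
  rw [integral_const_mul,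
    integral_sub_right_eq_self (fun θ => Real.exp (-(α / 2) * (θ ⬝ᵥ (C⁻¹ *ᵥ θ)))) m,
    integral_exp_neg_quadForm hC]
  have h1 : √(Real.pi / (α / 2)) ^ d = (2 * Real.pi) ^ ((d : ℝ) / 2) * α ^ (-((d : ℝ) / 2)) := by
    rw [Real.sqrt_eq_rpow, ← Real.rpow_natCast, ← Real.rpow_mul (by positivity),
      show Real.pi / (α / 2) = (2 * Real.pi) * α⁻¹ by field_simp,
      Real.mul_rpow (by positivity) (by positivity), Real.inv_rpow hα.le, ← Real.rpow_neg hα.le]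
    ring_nf
  have h2 : (2 * Real.pi) ^ (-(d : ℝ) / 2) * (2 * Real.pi) ^ ((d : ℝ) / 2) = 1 := by
    rw [← Real.rpow_add (by positivity)]; ring_nf; simp
  have h3 : α ^ ((d : ℝ) / 2) * α ^ (-((d : ℝ) / 2)) = 1 := by
    rw [← Real.rpow_add hα]; simp
  have h4 : C.det ^ (-(1 : ℝ) / 2) * C.det ^ ((1 : ℝ) / 2) = 1 := by
    rw [← Real.rpow_add hCd]; norm_num
  rw [h1]
  linear_combination (α ^ ((d : ℝ) / 2) * α ^ (-((d : ℝ) / 2)) *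
    (C.det ^ (-(1 : ℝ) / 2) * C.det ^ ((1 : ℝ) / 2))) * h2 +
    (C.det ^ (-(1 : ℝ) / 2) * C.det ^ ((1 : ℝ) / 2)) * h3 + h4

/-! ### Minimisers of strongly convex functions -/

section Convex

variable {d : ℕ} {f : (Fin d → ℝ) → ℝ} {α : ℝ} {S : Matrix (Fin d) (Fin d) ℝ}

/-- The quantitative convexity inequality along a segment: the defect of `f` from linear
interpolation is at least that of the quadratic form. -/
lemma strongConvex_le (hS : S.IsSymm)
    (hconv : ConvexOn ℝ Set.univ fun θ => f θ - α / 2 * (θ ⬝ᵥ (S *ᵥ θ)))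
    (x y : Fin d → ℝ) {t : ℝ} (ht0 : 0 ≤ t) (ht1 : t ≤ 1) :
    f (x + t • (y - x)) ≤
      (1 - t) * f x + t * f y - α / 2 * (t * (1 - t)) * ((y - x) ⬝ᵥ (S *ᵥ (y - x))) := by
  have h := hconv.2 (Set.mem_univ x) (Set.mem_univ y) (sub_nonneg.2 ht1) ht0 (by ring)
  have hxy : (1 - t) • x + t • y = x + t • (y - x) := by module
  have hc : y ⬝ᵥ (S *ᵥ x) = x ⬝ᵥ (S *ᵥ y) := by
    rw [Matrix.dotProduct_mulVec, ← Matrix.mulVec_transpose, hS.eq, dotProduct_comm]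
  simp only [hxy, smul_eq_mul] at h
  simp only [Matrix.mulVec_add, Matrix.mulVec_sub, Matrix.mulVec_smul, dotProduct_add,
    add_dotProduct, sub_dotProduct, dotProduct_sub, smul_dotProduct, dotProduct_smul,
    smul_eq_mul] at h ⊢
  simp only [hc] at h ⊢
  linarith

/-- Quadratic growth away from a minimiser `x`: compare `f x` with `f` at `x + t (y - x)`, divide by
`t`, and let `t → 0`. -/
lemma add_quadForm_le_of_isMin (hS : S.IsSymm)
    (hconv : ConvexOn ℝ Set.univ fun θ => f θ - α / 2 * (θ ⬝ᵥ (S *ᵥ θ)))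
    {x : Fin d → ℝ} (hx : ∀ θ, f x ≤ f θ) (y : Fin d → ℝ) :
    f x + α / 2 * ((y - x) ⬝ᵥ (S *ᵥ (y - x))) ≤ f y := by
  set Q := (y - x) ⬝ᵥ (S *ᵥ (y - x))
  have key : ∀ t ∈ Set.Ioo (0 : ℝ) 1, f x + α / 2 * (1 - t) * Q ≤ f y := by
    intro t ht
    have h1 := strongConvex_le hS hconv x y ht.1.le ht.2.le
    have h2 := hx (x + t • (y - x))
    refine le_of_mul_le_mul_left ?_ ht.1
    linarith
  have hlim : Tendsto (fun t : ℝ => f x + α / 2 * (1 - t) * Q) (nhdsWithin 0 (Set.Ioi 0))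
      (nhds (f x + α / 2 * (1 - 0) * Q)) :=
    (Continuous.tendsto (by fun_prop) 0).mono_left nhdsWithin_le_nhds
  rw [sub_zero, mul_one] at hlim
  exact le_of_tendsto hlim (mem_of_superset (Ioo_mem_nhdsGT one_pos) key)

lemma exists_isMin_of_strongConvex (hα : 0 < α) (hS : S.PosDef)
    (hconv : ConvexOn ℝ Set.univ fun θ => f θ - α / 2 * (θ ⬝ᵥ (S *ᵥ θ))) :
    ∃ x, ∀ θ, f x ≤ f θ := by
  have hSs : S.IsSymm := by
    have := hS.isHermitian
    rwa [Matrix.IsHermitian, conjTranspose_eq_transpose_of_trivial] at this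
  have hQpos : ∀ u : Fin d → ℝ, u ≠ 0 → 0 < u ⬝ᵥ (S *ᵥ u) := fun u hu => by
    simpa using hS.dotProduct_mulVec_pos hu
  have hQc : Continuous fun θ : Fin d → ℝ => θ ⬝ᵥ (S *ᵥ θ) := by
    simp only [dotProduct, Matrix.mulVec]; fun_prop
  have hfc : Continuous f := by
    have h := hconv.locallyLipschitz.continuous.add (hQc.const_mul (α / 2))
    exact h.congr fun θ => sub_add_cancel _ _
  -- The sublevel set of `f 0` is bounded: if `f x ≤ f 0` and `r = ‖x‖ > 1`, convexity on the segment
  -- from `0` to `x` gives `f (x / r) ≤ f 0 - (α / 2) (r - 1) Q(x / r)`, where `Q` is bounded below by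
  -- a positive constant and `f` by a constant on the unit sphere.
  obtain ⟨R, hR0, hR⟩ : ∃ R : ℝ, 0 ≤ R ∧ ∀ x, f x ≤ f 0 → ‖x‖ ≤ R := by
    rcases (Metric.sphere (0 : Fin d → ℝ) 1).eq_empty_or_nonempty with he | hne
    -- The unit sphere is empty only when `d = 0`.
    · refine ⟨0, le_rfl, fun x _ => ?_⟩
      by_contra! hx
      have : ‖x‖⁻¹ • x ∈ Metric.sphere (0 : Fin d → ℝ) 1 := by
        simp [norm_smul, hx.ne']
      simp [he] at this
    · obtain ⟨u₀, hu₀, hQmin⟩ := (isCompact_sphere (0 : Fin d → ℝ) 1).exists_isMinOn hne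
        hQc.continuousOn
      obtain ⟨u₁, hu₁, hfmin⟩ := (isCompact_sphere (0 : Fin d → ℝ) 1).exists_isMinOn hne
        hfc.continuousOn
      set c := u₀ ⬝ᵥ (S *ᵥ u₀)
      have hc : 0 < c := hQpos u₀ (by rintro rfl; simp at hu₀)
      refine ⟨max 1 (1 + (f 0 - f u₁) / (α / 2 * c)), by positivity, fun x hx => ?_⟩
      by_contra! hlt
      obtain ⟨h1, h2⟩ := max_lt_iff.1 hlt
      set r := ‖x‖
      have hr0 : 0 < r := by linarith
      have hus : r⁻¹ • x ∈ Metric.sphere (0 : Fin d → ℝ) 1 := by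
        simp [norm_smul, r, hr0.ne']
      have hs := strongConvex_le hSs hconv 0 x (inv_nonneg.2 hr0.le) (inv_le_one_of_one_le₀ h1.le)
      simp only [sub_zero, zero_add] at hs
      have hQ : c ≤ _ := hQmin hus
      have hF : f u₁ ≤ _ := hfmin hus
      simp only [Matrix.mulVec_smul, smul_dotProduct, dotProduct_smul, smul_eq_mul] at hQ
      rw [← lt_sub_iff_add_lt', div_lt_iff₀ (by positivity)] at h2
      set q := x ⬝ᵥ (S *ᵥ x)
      have e1 : α / 2 * (r⁻¹ * (1 - r⁻¹)) * q = α / 2 * (r - 1) * (r⁻¹ * (r⁻¹ * q)) := by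
        field_simp
      have e2 : α / 2 * (r - 1) * c ≤ α / 2 * (r - 1) * (r⁻¹ * (r⁻¹ * q)) :=
        mul_le_mul_of_nonneg_left hQ (mul_nonneg (by positivity) (by linarith))
      have e3 : r⁻¹ * f x ≤ r⁻¹ * f 0 := mul_le_mul_of_nonneg_left hx (by positivity)
      nlinarith
  obtain ⟨x, -, hx⟩ := (isCompact_closedBall (0 : Fin d → ℝ) R).exists_isMinOn
    ⟨0, by simpa using hR0⟩ hfc.continuousOn
  refine ⟨x, fun θ => ?_⟩
  rcases le_total (f θ) (f 0) with h | h
  · exact hx (by simpa using hR θ h)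
  · exact (hx (by simpa using hR0 : (0 : Fin d → ℝ) ∈ _)).trans h

end Convex

/-! ### Wasserstein distance to a mixture with a point mass -/

section Wasserstein

variable {E : Type*} [MeasurableSpace E]

/-- The bound is the cost of the coupling that is diagonal on the `a μ` part and `δ_{x₀} ⊗ μ` on the
atom. -/
lemma wassersteinDist_mixture_le {ρ : E → E → ℝ} (hρ : Measurable fun p : E × E => ρ p.1 p.2)
    (hself : ∀ x, ρ x x = 0) (hsymm : ∀ x y, ρ x y = ρ y x)
    (μ : Measure E) [IsProbabilityMeasure μ] (x₀ : E) {a s : ℝ≥0∞} (has : a + s = 1) :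
    wassersteinDist ρ (a • μ + s • Measure.dirac x₀) μ ≤
      s * ∫⁻ x, ENNReal.ofReal (ρ x x₀) ∂μ := by
  have hd : Measurable fun x : E => (x, x) := measurable_id.prodMk measurable_id
  have he : Measurable fun x : E => (x₀, x) := measurable_const.prodMk measurable_id
  set ξ : Measure (E × E) := a • μ.map (fun x => (x, x)) + s • μ.map (fun x => (x₀, x)) with hξ
  have hmem : ξ ∈ couplings (a • μ + s • Measure.dirac x₀) μ := by
    constructor
    · rw [hξ, Measure.map_add _ _ measurable_fst, Measure.map_smul, Measure.map_smul,
        Measure.map_map measurable_fst hd, Measure.map_map measurable_fst he]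
      congr 2
      · exact Measure.map_id
      · simp [Function.comp_def, Measure.map_const]
    · rw [hξ, Measure.map_add _ _ measurable_snd, Measure.map_smul, Measure.map_smul,
        Measure.map_map measurable_snd hd, Measure.map_map measurable_snd he]
      simp only [Function.comp_def]
      rw [← add_smul, has, one_smul, Measure.map_id']
  refine (iInf₂_le ξ hmem).trans_eq ?_
  rw [hξ, lintegral_add_measure, lintegral_smul_measure, lintegral_smul_measure,
    lintegral_map hρ.ennreal_ofReal hd, lintegral_map hρ.ennreal_ofReal he]
  simp [hself, hsymm x₀]

/-- Weak Kantorovich duality applied to the bounded potentials `min (ρ(·, x₀)) n`, so that no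
integrability of `ρ(·, x₀)` is needed. -/
lemma le_wassersteinDist_mixture {ρ : E → E → ℝ} (hρ : Measurable fun p : E × E => ρ p.1 p.2)
    (hnn : ∀ x y, 0 ≤ ρ x y)
    (hself : ∀ x, ρ x x = 0) (hsymm : ∀ x y, ρ x y = ρ y x)
    (htri : ∀ x y z, ρ x z ≤ ρ x y + ρ y z)
    (μ : Measure E) [IsProbabilityMeasure μ] (x₀ : E) {a s : ℝ≥0∞} (has : a + s = 1) :
    s * ∫⁻ x, ENNReal.ofReal (ρ x x₀) ∂μ ≤
      wassersteinDist ρ (a • μ + s • Measure.dirac x₀) μ := by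
  refine le_iInf₂ fun ξ hξ => ?_
  obtain ⟨h1, h2⟩ := hξ
  have hg : Measurable fun x => ENNReal.ofReal (ρ x x₀) :=
    (hρ.comp (measurable_id.prodMk measurable_const)).ennreal_ofReal
  set φ : ℕ → E → ℝ≥0∞ := fun n x => min (ENNReal.ofReal (ρ x x₀)) n with hφ
  have hφm : ∀ n, Measurable (φ n) := fun n => hg.min measurable_const
  have hφ0 : ∀ n, φ n x₀ = 0 := fun n => by simp [hφ, hself]
  have ha1 : a ≤ 1 := has ▸ le_self_add
  have hsup : ∫⁻ x, ENNReal.ofReal (ρ x x₀) ∂μ = ⨆ n, ∫⁻ x, φ n x ∂μ := by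
    rw [← lintegral_iSup hφm]
    · refine lintegral_congr fun x => ?_
      refine le_antisymm ?_ (iSup_le fun n => min_le_left _ _)
      obtain ⟨n, hn⟩ := exists_nat_ge (ρ x x₀)
      refine le_iSup_of_le n (le_min le_rfl ?_)
      simpa using ENNReal.ofReal_le_ofReal hn
    · intro n m hnm x
      exact min_le_min le_rfl (by exact_mod_cast hnm)
  rw [hsup, ENNReal.mul_iSup]
  refine iSup_le fun n => ?_
  have hfin : ∫⁻ x, φ n x ∂μ ≠ ∞ := by
    refine ne_top_of_le_ne_top (b := (n : ℝ≥0∞)) (by simp) ?_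
    calc ∫⁻ x, φ n x ∂μ ≤ ∫⁻ _, (n : ℝ≥0∞) ∂μ := lintegral_mono fun x => min_le_right _ _
      _ = n := by simp
  have hLip : ∀ p : E × E, φ n p.2 ≤ φ n p.1 + ENNReal.ofReal (ρ p.1 p.2) := by
    rintro ⟨x, y⟩
    have hle : ENNReal.ofReal (ρ y x₀) ≤ ENNReal.ofReal (ρ x x₀) + ENNReal.ofReal (ρ x y) := by
      rw [← ENNReal.ofReal_add (hnn _ _) (hnn _ _)]
      exact ENNReal.ofReal_le_ofReal (by linarith [htri y x x₀, hsymm x y])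
    rcases le_total (ENNReal.ofReal (ρ x x₀)) n with h | h
    · simp only [hφ, min_eq_left h]
      exact (min_le_left _ _).trans hle
    · simp only [hφ, min_eq_right h]
      exact (min_le_right _ _).trans le_self_add
  have hint : ∫⁻ y, φ n y ∂μ ≤ a * ∫⁻ x, φ n x ∂μ + ∫⁻ p, ENNReal.ofReal (ρ p.1 p.2) ∂ξ := by
    calc ∫⁻ y, φ n y ∂μ = ∫⁻ p, φ n p.2 ∂ξ := by
          conv_lhs => rw [← h2]
          rw [lintegral_map (hφm n) measurable_snd]
      _ ≤ ∫⁻ p, (φ n p.1 + ENNReal.ofReal (ρ p.1 p.2)) ∂ξ := lintegral_mono hLip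
      _ = ∫⁻ p, φ n p.1 ∂ξ + ∫⁻ p, ENNReal.ofReal (ρ p.1 p.2) ∂ξ :=
          lintegral_add_right _ hρ.ennreal_ofReal
      _ = _ := by
          rw [← lintegral_map (hφm n) measurable_fst, h1, lintegral_add_measure,
            lintegral_smul_measure, lintegral_smul_measure, lintegral_dirac' _ (hφm n), hφ0]
          simp
  have hsplit : ∫⁻ y, φ n y ∂μ = a * ∫⁻ x, φ n x ∂μ + s * ∫⁻ x, φ n x ∂μ := by
    rw [← add_mul, has, one_mul]
  refine (ENNReal.add_le_add_iff_left
    (ENNReal.mul_ne_top (ne_top_of_le_ne_top one_ne_top ha1) hfin)).1 ?_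
  rwa [← hsplit]

end Wasserstein

/-! ### Iterates of a kernel -/

section Iterates

variable {E : Type*} [MeasurableSpace E]

lemma measurable_kernelIter {P : E → Measure E} (hP : Measurable P) (t : ℕ) :
    Measurable (kernelIter P t) := by
  induction t with
  | zero => exact Measure.measurable_dirac
  | succ t ih => exact (Measure.measurable_bind' ih).comp hP

lemma bind_kernelIter {P : E → Measure E} (hP : Measurable P) {μ : Measure E}
    (hμ : μ.bind P = μ) (t : ℕ) : μ.bind (kernelIter P t) = μ := by
  induction t with
  | zero => exact Measure.bind_dirac
  | succ t ih =>
    have := Measure.bind_bind (m := μ) hP.aemeasurable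
      (measurable_kernelIter hP t).aemeasurable
    rw [hμ, ih] at this
    exact this.symm

/-- If one step from `x₀` draws from the invariant measure `μ` with weight `ε` and stays put
with weight `δ`, then the law after `t` steps is the mixture of `μ` and `δ_{x₀}` in which the point
mass has weight `δ ^ t`. -/
lemma kernelIter_eq_mixture {P : E → Measure E} (hP : Measurable P) {μ : Measure E}
    (hμ : μ.bind P = μ) {x₀ : E} {ε δ : ℝ≥0∞} (hεδ : ε + δ = 1)
    (hx₀ : P x₀ = ε • μ + δ • Measure.dirac x₀) (t : ℕ) :
    ∃ a : ℝ≥0∞, a + δ ^ t = 1 ∧ kernelIter P t x₀ = a • μ + δ ^ t • Measure.dirac x₀ := by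
  induction t with
  | zero => exact ⟨0, by simp, by simp [kernelIter]⟩
  | succ t ih =>
    obtain ⟨a, ha, hk⟩ := ih
    refine ⟨ε + δ * a, ?_, ?_⟩
    · rw [pow_succ', add_assoc, ← mul_add, ha, mul_one, hεδ]
    · have hm := measurable_kernelIter hP t
      have hadd : ∀ μ₁ μ₂ : Measure E, (μ₁ + μ₂).bind (kernelIter P t) =
          μ₁.bind (kernelIter P t) + μ₂.bind (kernelIter P t) := fun μ₁ μ₂ => by
        ext s hs
        simp [Measure.bind_apply hs hm.aemeasurable]
      rw [kernelIter, hx₀, hadd, Measure.bind_smul, Measure.bind_smul, bind_kernelIter hP hμ,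
        Measure.dirac_bind hm, hk, smul_add, smul_smul, smul_smul, add_smul, pow_succ', add_assoc]

end Iterates

/-! ### The MHI kernel -/

lemma mhiAccept_mul {E : Type*} {π q : E → ℝ} (hπ : ∀ x, 0 < π x) (hq : ∀ x, 0 < q x) (x y : E) :
    π x * (mhiAccept π q x y * q y) = min (π y * q x) (π x * q y) := by
  have h : 0 < π x * q y := mul_pos (hπ x) (hq y)
  rw [mhiAccept, if_pos h, mul_left_comm, min_mul_of_nonneg _ _ h.le, one_mul,
    div_mul_cancel₀ _ h.ne']

lemma mhiAccept_nonneg {E : Type*} {π q : E → ℝ} (hπ : ∀ x, 0 < π x) (hq : ∀ x, 0 < q x)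
    (x y : E) : 0 ≤ mhiAccept π q x y := by
  have := hπ x; have := hπ y; have := hq x; have := hq y
  rw [mhiAccept, if_pos (by positivity)]
  positivity

lemma mhiAccept_le_one {E : Type*} {π q : E → ℝ} (x y : E) : mhiAccept π q x y ≤ 1 := by
  unfold mhiAccept
  split_ifs
  · exact min_le_right _ _
  · exact le_rfl

/-- Density of the moving part of the MHI kernel, as an extended nonnegative function. -/
noncomputable def mhiDens {E : Type*} (π q : E → ℝ) (x y : E) : ℝ≥0∞ :=
  ENNReal.ofReal (mhiAccept π q x y * q y)

lemma mhiDens_detailedBalance {E : Type*} {π q : E → ℝ}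
    (hπ : ∀ x, 0 < π x) (hq : ∀ x, 0 < q x) (x y : E) :
    ENNReal.ofReal (π x) * mhiDens π q x y = ENNReal.ofReal (π y) * mhiDens π q y x := by
  rw [mhiDens, mhiDens, ← ENNReal.ofReal_mul (hπ x).le, ← ENNReal.ofReal_mul (hπ y).le,
    mhiAccept_mul hπ hq, mhiAccept_mul hπ hq, min_comm]

section Kernel

variable {E : Type*} [MeasureSpace E] {π q : E → ℝ}

lemma measurable_mhiAccept (hπm : Measurable π) (hqm : Measurable q) :
    Measurable fun p : E × E => mhiAccept π q p.1 p.2 := by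
  unfold mhiAccept
  refine Measurable.ite (measurableSet_lt measurable_const ?_) ?_ measurable_const <;> fun_prop

lemma measurable_mhiDens (hπm : Measurable π) (hqm : Measurable q) :
    Measurable fun p : E × E => mhiDens π q p.1 p.2 :=
  ((measurable_mhiAccept hπm hqm).mul (hqm.comp measurable_snd)).ennreal_ofReal

lemma lintegral_mhiDens_le_one (hq : ∀ x, 0 < q x) (hqint : ∫ x, q x = 1) (x : E) :
    ∫⁻ y, mhiDens π q x y ≤ 1 := by
  have hi : Integrable q := integrable_of_integral_eq_one hqint
  calc ∫⁻ y, mhiDens π q x y ≤ ∫⁻ y, ENNReal.ofReal (q y) :=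
        lintegral_mono fun y => ENNReal.ofReal_le_ofReal
          (mul_le_of_le_one_left (hq y).le (mhiAccept_le_one x y))
    _ = 1 := by
        rw [← ofReal_integral_eq_lintegral_ofReal hi (ae_of_all _ fun y => (hq y).le), hqint,
          ENNReal.ofReal_one]

/-- The MHI kernel with the rejection probability `1 - A` expressed by a Lebesgue integral. -/
lemma mhiKernel_eq (hπ : ∀ x, 0 < π x) (hq : ∀ x, 0 < q x) (hπm : Measurable π)
    (hqm : Measurable q) (hqint : ∫ x, q x = 1) (x : E) :
    mhiKernel Set.univ π q x = volume.withDensity (mhiDens π q x) +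
      (1 - ∫⁻ y, mhiDens π q x y) • Measure.dirac x := by
  have hnn : ∀ y, 0 ≤ mhiAccept π q x y * q y := fun y =>
    mul_nonneg (mhiAccept_nonneg hπ hq x y) (hq y).le
  have hm : Measurable fun y => mhiAccept π q x y * q y :=
    ((measurable_mhiAccept hπm hqm).comp measurable_prodMk_left).mul hqm
  have hA : ENNReal.ofReal (1 - mhiAcceptProb Set.univ π q x) = 1 - ∫⁻ y, mhiDens π q x y := by
    have hi : Integrable fun y => mhiAccept π q x y * q y :=
      (integrable_of_integral_eq_one hqint).mono' hm.aestronglyMeasurable <|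
        ae_of_all _ fun y => by
          rw [Real.norm_of_nonneg (hnn y)]
          exact mul_le_of_le_one_left (hq y).le (mhiAccept_le_one x y)
    rw [mhiAcceptProb, Measure.restrict_univ, ENNReal.ofReal_sub _ (integral_nonneg hnn),
      ofReal_integral_eq_lintegral_ofReal hi (ae_of_all _ hnn), ENNReal.ofReal_one]
    rfl
  rw [mhiKernel, Measure.restrict_univ, hA]
  rfl

/-- If `ε π ≤ q` everywhere with equality at `x₀`, then a proposal `y` from `x₀` is accepted
with probability `ε π(y) / q(y)`, so a step from `x₀` is a step of `Π` with probability `ε`. -/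
lemma mhiKernel_apply_of_minorized (hπ : ∀ x, 0 < π x) (hq : ∀ x, 0 < q x) (hπm : Measurable π)
    (hqm : Measurable q) (hqint : ∫ x, q x = 1) {μ : Measure E} [IsProbabilityMeasure μ]
    (hμ : μ = volume.withDensity fun x => ENNReal.ofReal (π x)) {ε : ℝ} (hε : 0 ≤ ε) {x₀ : E}
    (hle : ∀ x, ε * π x ≤ q x) (heq : ε * π x₀ = q x₀) :
    mhiKernel Set.univ π q x₀ =
      ENNReal.ofReal ε • μ + (1 - ENNReal.ofReal ε) • Measure.dirac x₀ := by
  have hdens : mhiDens π q x₀ = fun y => ENNReal.ofReal ε * ENNReal.ofReal (π y) := by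
    funext y
    rw [← ENNReal.ofReal_mul hε, mhiDens]
    congr 1
    refine mul_left_cancel₀ (hπ x₀).ne' ?_
    rw [mhiAccept_mul hπ hq, ← heq, min_eq_left]
    · ring
    · nlinarith [mul_le_mul_of_nonneg_left (hle y) (hπ x₀).le]
  have hw : volume.withDensity (mhiDens π q x₀) = ENNReal.ofReal ε • μ := by
    rw [hdens, hμ, ← withDensity_smul _ hπm.ennreal_ofReal]
    rfl
  have hmass : ∫⁻ y, mhiDens π q x₀ y = ENNReal.ofReal ε := by
    rw [← setLIntegral_univ, ← withDensity_apply _ MeasurableSet.univ, hw]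
    simp
  rw [mhiKernel_eq hπ hq hπm hqm hqint, hw, hmass]

variable [SFinite (volume : Measure E)]

lemma measurable_mhiKernel (hπ : ∀ x, 0 < π x) (hq : ∀ x, 0 < q x) (hπm : Measurable π)
    (hqm : Measurable q) (hqint : ∫ x, q x = 1) : Measurable (mhiKernel Set.univ π q) := by
  refine Measure.measurable_of_measurable_coe _ fun s hs => ?_
  simp only [mhiKernel_eq hπ hq hπm hqm hqint, Measure.add_apply, withDensity_apply _ hs,
    Measure.smul_apply, smul_eq_mul, Measure.dirac_apply' _ hs]
  have hd := measurable_mhiDens hπm hqm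
  exact (hd.lintegral_prod_right' (ν := volume.restrict s)).add
    (((hd.lintegral_prod_right' (ν := volume)).const_sub 1).mul (measurable_const.indicator hs))

/-- The target is invariant: detailed balance turns the mass moved into `s` into
`∫_s A dμ`, and the mass staying in `s` is `∫_s (1 - A) dμ`. -/
lemma bind_mhiKernel (hπ : ∀ x, 0 < π x) (hq : ∀ x, 0 < q x) (hπm : Measurable π)
    (hqm : Measurable q) (hqint : ∫ x, q x = 1) {μ : Measure E}
    (hμ : μ = volume.withDensity fun x => ENNReal.ofReal (π x)) :
    μ.bind (mhiKernel Set.univ π q) = μ := by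
  ext s hs
  have hd := measurable_mhiDens hπm hqm
  have hA : Measurable fun x => ∫⁻ y, mhiDens π q x y := hd.lintegral_prod_right'
  have hAs : Measurable fun x => ∫⁻ y in s, mhiDens π q x y := hd.lintegral_prod_right'
  rw [Measure.bind_apply hs (measurable_mhiKernel hπ hq hπm hqm hqint).aemeasurable]
  simp only [mhiKernel_eq hπ hq hπm hqm hqint, Measure.add_apply, withDensity_apply _ hs,
    Measure.smul_apply, smul_eq_mul, Measure.dirac_apply' _ hs]
  rw [lintegral_add_left hAs]
  have hmove : ∫⁻ x, ∫⁻ y in s, mhiDens π q x y ∂volume ∂μ =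
      ∫⁻ y in s, (∫⁻ x, mhiDens π q y x) ∂μ := by
    rw [hμ, lintegral_withDensity_eq_lintegral_mul _ hπm.ennreal_ofReal hAs,
      setLIntegral_withDensity_eq_setLIntegral_mul _ hπm.ennreal_ofReal hA hs]
    simp only [Pi.mul_apply]
    have hrow : ∀ x, Measurable (mhiDens π q x) := fun x => hd.comp measurable_prodMk_left
    calc ∫⁻ x, ENNReal.ofReal (π x) * ∫⁻ y in s, mhiDens π q x y
        = ∫⁻ x, ∫⁻ y in s, ENNReal.ofReal (π x) * mhiDens π q x y :=
          lintegral_congr fun x => (lintegral_const_mul _ (hrow x)).symm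
      _ = ∫⁻ y in s, ∫⁻ x, ENNReal.ofReal (π x) * mhiDens π q x y :=
          lintegral_lintegral_swap
            ((hπm.comp measurable_fst).ennreal_ofReal.mul hd).aemeasurable
      _ = ∫⁻ y in s, ENNReal.ofReal (π y) * ∫⁻ x, mhiDens π q y x :=
          lintegral_congr fun y => by
            simp_rw [fun x => mhiDens_detailedBalance hπ hq x y]
            exact lintegral_const_mul _ (hrow y)
  have hstay : ∫⁻ x, (1 - ∫⁻ y, mhiDens π q x y) * s.indicator 1 x ∂μ =
      ∫⁻ x in s, (1 - ∫⁻ y, mhiDens π q x y) ∂μ := by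
    rw [← lintegral_indicator hs]
    refine lintegral_congr fun x => ?_
    by_cases hx : x ∈ s <;> simp [hx]
  rw [hmove, hstay, ← lintegral_add_left hA]
  simp_rw [add_tsub_cancel_of_le (lintegral_mhiDens_le_one hq hqint _)]
  simp

end Kernel

/-! ### The exact rate -/

/-- Proposition 4.3, exact rate under strong convexity.
Target density `π(θ) = Z⁻¹ exp(-f(θ))` on `ℝ^d`. If `θ ↦ f(θ) - (α/2) θᵀ C⁻¹ θ` is convex,
then `f` attains a unique minimum `θ*`, and the MHI algorithm with proposal `N_d(θ*, α⁻¹ C)`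
satisfies, for every lower semicontinuous metric `ρ` and every `t ≥ 1`,
`W_ρ(P^t(θ*,·), Π) = (1 - ε)^t ∫ ρ(θ, θ*) dΠ(θ)`, where
`ε = (2π)^{-d/2} α^{d/2} det(C)^{-1/2} Z exp(f(θ*))`. -/
theorem mhi_strongly_convex_exact_rate
    {d : ℕ} (f : (Fin d → ℝ) → ℝ) (hfmeas : Measurable f)
    (Z : ℝ) (hZ : 0 < Z)
    -- `π = Z⁻¹ exp(-f)` is a probability density on `ℝ^d`
    (Pi : Measure (Fin d → ℝ)) [IsProbabilityMeasure Pi]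
    (hPi : Pi = volume.withDensity fun θ => ENNReal.ofReal (Z⁻¹ * Real.exp (-f θ)))
    (α : ℝ) (hα : 0 < α)
    (C : Matrix (Fin d) (Fin d) ℝ) (hCsymm : C.IsSymm) (hCpd : C.PosDef)
    -- `θ ↦ f(θ) - (α/2) θᵀ C⁻¹ θ` is convex on `ℝ^d`
    (hconv : ConvexOn ℝ Set.univ fun θ => f θ - α / 2 * (θ ⬝ᵥ (C⁻¹ *ᵥ θ))) :
    ∃ θstar : Fin d → ℝ,
      (∀ θ, f θstar ≤ f θ) ∧
      (∀ θ' : Fin d → ℝ, (∀ θ, f θ' ≤ f θ) → θ' = θstar) ∧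
      ∀ ρ : (Fin d → ℝ) → (Fin d → ℝ) → ℝ, IsLSCMetricOn Set.univ ρ →
        ∀ t : ℕ, 1 ≤ t →
          wassersteinDist ρ
              (kernelIter
                (mhiKernel Set.univ (fun θ => Z⁻¹ * Real.exp (-f θ)) (gaussDensity θstar α C))
                t θstar) Pi =
            ENNReal.ofReal
                ((1 - (2 * Real.pi) ^ (-(d : ℝ) / 2) * α ^ ((d : ℝ) / 2) *
                    C.det ^ (-(1 : ℝ) / 2) * Z * Real.exp (f θstar)) ^ t) *
              ∫⁻ θ, ENNReal.ofReal (ρ θ θstar) ∂Pi := by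
  have hSs : C⁻¹.IsSymm := by rw [Matrix.IsSymm, Matrix.transpose_nonsing_inv, hCsymm.eq]
  obtain ⟨θstar, hmin⟩ := exists_isMin_of_strongConvex hα hCpd.inv hconv
  have hgrow := add_quadForm_le_of_isMin hSs hconv hmin
  refine ⟨θstar, hmin, fun θ' hθ' => ?_, fun ρ hρ t _ => ?_⟩
  · by_contra hne
    have hpos : 0 < (θ' - θstar) ⬝ᵥ (C⁻¹ *ᵥ (θ' - θstar)) := by
      simpa using hCpd.inv.dotProduct_mulVec_pos (sub_ne_zero.2 hne)
    have := mul_pos (half_pos hα) hpos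
    linarith [hgrow θ', hθ' θstar]
  obtain ⟨hlsc, hnn, hself, -, hsymm, htri⟩ := hρ
  replace hnn : ∀ x y, 0 ≤ ρ x y := fun x y => hnn x trivial y trivial
  replace hself : ∀ x, ρ x x = 0 := fun x => hself x trivial
  replace hsymm : ∀ x y, ρ x y = ρ y x := fun x y => hsymm x trivial y trivial
  replace htri : ∀ x y z, ρ x z ≤ ρ x y + ρ y z := fun x y z =>
    htri x trivial y trivial z trivial
  rw [Set.univ_prod_univ, lowerSemicontinuousOn_univ_iff] at hlsc
  have hρm : Measurable fun p : (Fin d → ℝ) × (Fin d → ℝ) => ρ p.1 p.2 := hlsc.measurable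
  set c : ℝ := (2 * Real.pi) ^ (-(d : ℝ) / 2) * α ^ ((d : ℝ) / 2) * C.det ^ (-(1 : ℝ) / 2) with hc
  have hc0 : 0 < c := by
    have := hCpd.det_pos
    have := Real.pi_pos
    positivity
  set π : (Fin d → ℝ) → ℝ := fun θ => Z⁻¹ * Real.exp (-f θ) with hπdef
  set q := gaussDensity θstar α C with hqdef
  set ε : ℝ := c * Z * Real.exp (f θstar) with hεdef
  have hε0 : 0 ≤ ε := by positivity
  have hπ : ∀ x, 0 < π x := fun x => by simp only [hπdef]; positivity
  have hq_eq : ∀ x, q x = c * Real.exp (-(α / 2) * ((x - θstar) ⬝ᵥ (C⁻¹ *ᵥ (x - θstar)))) :=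
    fun x => rfl
  have hq : ∀ x, 0 < q x := fun x => by rw [hq_eq]; positivity
  have hπm : Measurable π := by fun_prop
  have hqm : Measurable q := by
    refine Continuous.measurable ?_
    rw [funext hq_eq]
    simp only [dotProduct, Matrix.mulVec]
    fun_prop
  have hqint : ∫ x, q x = 1 := integral_gaussDensity θstar hα hCpd
  have hεπ : ∀ x, ε * π x = c * Real.exp (f θstar - f x) := fun x => by
    simp only [hεdef, hπdef]
    rw [sub_eq_add_neg, Real.exp_add]
    field_simp
  have hle : ∀ x, ε * π x ≤ q x := fun x => by
    rw [hεπ, hq_eq]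
    gcongr
    linarith [hgrow x]
  have heq : ε * π θstar = q θstar := by simp [hεπ, hq_eq]
  have hε1 : ε ≤ 1 := by
    have hπi : Integrable π := by
      refine ((integrable_of_integral_eq_one hqint).const_mul ε⁻¹).mono' hπm.aestronglyMeasurable
        (ae_of_all _ fun x => ?_)
      rw [Real.norm_of_nonneg (hπ x).le, le_inv_mul_iff₀ (by positivity)]
      exact hle x
    have hπ1 : ∫ x, π x = 1 := by
      have h1 : ∫⁻ x, ENNReal.ofReal (π x) = 1 := by
        rw [← setLIntegral_univ, ← withDensity_apply _ MeasurableSet.univ, ← hPi, measure_univ]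
      rw [integral_eq_lintegral_of_nonneg_ae (ae_of_all _ fun x => (hπ x).le)
        hπm.aestronglyMeasurable, h1, ENNReal.toReal_one]
    have := integral_mono (hπi.const_mul ε) (integrable_of_integral_eq_one hqint) hle
    rwa [integral_const_mul, hπ1, hqint, mul_one] at this
  obtain ⟨a, ha, hk⟩ := kernelIter_eq_mixture
    (measurable_mhiKernel hπ hq hπm hqm hqint) (bind_mhiKernel hπ hq hπm hqm hqint hPi)
    (add_tsub_cancel_of_le (ENNReal.ofReal_le_one.2 hε1))
    (mhiKernel_apply_of_minorized hπ hq hπm hqm hqint hPi hε0 hle heq) t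
  have hpow : ENNReal.ofReal ((1 - ε) ^ t) = (1 - ENNReal.ofReal ε) ^ t := by
    rw [ENNReal.ofReal_pow (sub_nonneg.2 hε1), ENNReal.ofReal_sub _ hε0, ENNReal.ofReal_one]
  rw [hk, hpow]
  exact le_antisymm (wassersteinDist_mixture_le hρm hself hsymm Pi θstar ha)
    (le_wassersteinDist_mixture hρm hnn hself hsymm htri Pi θstar ha)
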